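/- For all x, y ∈ V: Σ_{i∈ℤ/5} s(x, e+eᵢ+e_{i+1})·s(y, e+eᵢ+e_{i+1}) + Σ_{i∈ℤ/5} s(x, eᵢ−e_{i−2}−e_{i+2})·s(y, eᵢ−e_{i−2}−e_{i+2}) = 3·s(x,y) + 4·s(Xx, y). (That is, the variation tensor Σ_{δ∈Δ_c/±} δ⊗δ of the monodromy around a singular member of the Wiman–Edge pencil consisting of five conics equals (3+4X) applied to the inverse form of s.) -/

import Mathlib

/-! With the cyclic correlations `c d = ∑ i, xᵢ * y_{i + d}` and `c (±d) = c d + c (-d)`, summing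
the products of the pairings over the two families of vectors gives `2 * c 0 + c (±1)` plus terms
involving `e`, and `3 * c 0 - 2 * c (±2) + c (±4)`. Since `±4 = ∓1` in `ℤ/5`, the terms `c (±1)`
add up to `2 * c (±1)`, which `(∑ i, xᵢ) * (∑ i, yᵢ) = c 0 + c (±1) + c (±2)` trades for the
`-4 * c (±2)` coming from `4 * X`. -/

/-- Index type for the basis `e, e₀, …, e₄` of `V`: `none ↦ e`, `some i ↦ eᵢ`. -/
abbrev J5 := Option (ZMod 5)

/-- The 6-dimensional `ℚ`-vector space `V` with basis indexed by `J5`. -/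
abbrev V := J5 → ℚ

/-- The basis vector of `V` with index `j`. -/
def bvec : J5 → V := fun j => Pi.single j 1

/-- The basis vector `e`. -/
def eV : V := Pi.single none 1

/-- The basis vectors `eᵢ`, `i ∈ ℤ/5`. -/
def ee (i : ZMod 5) : V := Pi.single (some i) 1

/-- The symmetric bilinear form on `V` for which the basis `e, e₀, …, e₄` is orthonormal. -/
def sform (x y : V) : ℚ := ∑ j : J5, x j * y j

/-- `ε = ½(e + e₀ + e₁ + e₂ + e₃ + e₄)`. -/
def eps : V := (1 / 2 : ℚ) • (eV + ∑ i : ZMod 5, ee i)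

/-- The `ℚ`-linear map `X : V → V` determined by `X(e) = ε` and
`X(eᵢ) = ε − e_{i+2} − e_{i−2}` (indices mod 5); in coordinates,
`(X x)(j) = (Σ_t x_t)/2`, minus `x_{k−2} + x_{k+2}` when `j = some k`. -/
def Xmap : V →ₗ[ℚ] V where
  toFun x := fun j =>
    (∑ t : J5, x t) / 2 +
      (match j with
        | none => 0
        | some k => -(x (some (k - 2))) - x (some (k + 2)))
  map_add' x y := by
    funext j
    rcases j with _ | k <;> simp [Finset.sum_add_distrib] <;> ring
  map_smul' c x := by
    funext j
    have hs : (∑ i : ZMod 5, c * x (some i)) = c * ∑ i : ZMod 5, x (some i) :=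
      (Finset.mul_sum _ _ _).symm
    rcases j with _ | k <;> simp <;> rw [hs] <;> ring

section CrossCorrelation

variable {G R : Type*} [AddGroup G] [Fintype G]

section Semiring

variable [NonUnitalNonAssocSemiring R] (f g : G → R)

/-- The cross-correlation of two functions on a finite additive group: the sum of the products of
`f` with the translate of `g` by `d`. Translations act on the right, as `G` need not be commutative;
products of arbitrary translates reduce to it by `sum_shift_mul_shift`. -/
def crossCorrelation (d : G) : R := ∑ i, f i * g (i + d)

theorem sum_shift_mul_shift (a b : G) :
    ∑ i, f (i + a) * g (i + b) = crossCorrelation f g (-a + b) :=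
  Fintype.sum_equiv (Equiv.addRight a) _ _ fun i => by
    rw [Equiv.coe_addRight, add_assoc, add_neg_cancel_left]

theorem sum_shift_mul (a : G) : ∑ i, f (i + a) * g i = crossCorrelation f g (-a) := by
  simpa only [add_zero] using sum_shift_mul_shift f g a 0

theorem sum_mul_shift (b : G) : ∑ i, f i * g (i + b) = crossCorrelation f g b := rfl

theorem sum_mul_eq_crossCorrelation_zero : ∑ i, f i * g i = crossCorrelation f g 0 := by
  simp only [crossCorrelation, add_zero]

theorem sum_crossCorrelation :
    ∑ d, crossCorrelation f g d = (∑ i, f i) * ∑ i, g i := by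
  calc ∑ d, ∑ i, f i * g (i + d) = ∑ i, f i * ∑ d, g (i + d) := by
        rw [Finset.sum_comm]
        simp only [Finset.mul_sum]
    _ = ∑ i, f i * ∑ j, g j :=
        Finset.sum_congr rfl fun i _ => congrArg (f i * ·) (Equiv.sum_comp (Equiv.addLeft i) g)
    _ = (∑ i, f i) * ∑ j, g j := (Finset.sum_mul ..).symm

theorem sum_const_add_shift_mul_const_add_shift (u v : R) (d : G) :
    ∑ i, (u + f i + f (i + d)) * (v + g i + g (i + d)) =
      Fintype.card G • (u * v) + 2 • (u * ∑ i, g i + (∑ i, f i) * v) +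
        2 • crossCorrelation f g 0 + crossCorrelation f g d + crossCorrelation f g (-d) := by
  have shift_f : ∑ i, f (i + d) = ∑ i, f i := Equiv.sum_comp (Equiv.addRight d) f
  have shift_g : ∑ i, g (i + d) = ∑ i, g i := Equiv.sum_comp (Equiv.addRight d) g
  simp only [add_mul, mul_add, Finset.sum_add_distrib, ← Finset.mul_sum, ← Finset.sum_mul,
    shift_f, shift_g, sum_shift_mul_shift, sum_shift_mul, sum_mul_shift,
    sum_mul_eq_crossCorrelation_zero, neg_add_cancel, Finset.sum_const, Finset.card_univ,
    mul_smul_comm]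
  abel

end Semiring

theorem sum_sub_shifts_mul_sub_shifts [NonUnitalNonAssocRing R] (f g : G → R) (d : G) :
    ∑ i, (f i - f (i - d) - f (i + d)) * (g i - g (i - d) - g (i + d)) =
      3 • crossCorrelation f g 0 - 2 • (crossCorrelation f g d + crossCorrelation f g (-d)) +
        (crossCorrelation f g (d + d) + crossCorrelation f g (-d + -d)) := by
  simp only [sub_eq_add_neg _ d, sub_mul, mul_sub, Finset.sum_sub_distrib, sum_shift_mul_shift,
    sum_shift_mul, sum_mul_shift, sum_mul_eq_crossCorrelation_zero, neg_add_cancel,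
    add_neg_cancel, neg_neg]
  abel

end CrossCorrelation

theorem sum_univ_zmod_five {M : Type*} [AddCommMonoid M] (f : ZMod 5 → M) :
    ∑ i, f i = f 0 + (f 1 + f (-1)) + (f 2 + f (-2)) := by
  calc ∑ i, f i = f 0 + f 1 + f 2 + f (-2) + f (-1) := Fin.sum_univ_five f
    _ = f 0 + (f 1 + f (-1)) + (f 2 + f (-2)) := by abel

theorem sform_eq_dotProduct (x y : V) : sform x y = x ⬝ᵥ y := rfl

theorem sform_eV_add_ee_add_ee (x : V) (i j : ZMod 5) :
    sform x (eV + ee i + ee j) = x none + x (some i) + x (some j) := by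
  simp only [sform_eq_dotProduct, eV, ee, dotProduct_add, dotProduct_single_one]

theorem sform_ee_sub_ee_sub_ee (x : V) (i j k : ZMod 5) :
    sform x (ee i - ee j - ee k) = x (some i) - x (some j) - x (some k) := by
  simp only [sform_eq_dotProduct, ee, dotProduct_sub, dotProduct_single_one]

theorem sform_eq_add_crossCorrelation (x y : V) :
    sform x y = x none * y none + crossCorrelation (x ∘ some) (y ∘ some) 0 := by
  simp only [sform, crossCorrelation, Fintype.sum_option, Function.comp_apply, add_zero]

theorem sform_Xmap (x y : V) :
    sform (Xmap x) y = (∑ j, x j) * (∑ j, y j) / 2 -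
      (crossCorrelation (x ∘ some) (y ∘ some) 2 + crossCorrelation (x ∘ some) (y ∘ some) (-2)) := by
  have apply_none : Xmap x none = (∑ j, x j) / 2 := add_zero _
  have apply_some (k : ZMod 5) :
      Xmap x (some k) = (∑ j, x j) / 2 + (-x (some (k - 2)) - x (some (k + 2))) := rfl
  have shift_left := sum_shift_mul (x ∘ some) (y ∘ some) (-2)
  have shift_right := sum_shift_mul (x ∘ some) (y ∘ some) 2
  simp only [Function.comp_apply, neg_neg, ← sub_eq_add_neg] at shift_left shift_right
  calc sform (Xmap x) y
      = (∑ j, x j) / 2 * y none + ((∑ j, x j) / 2 * ∑ i : ZMod 5, y (some i) -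
          ∑ i, x (some (i - 2)) * y (some i) - ∑ i, x (some (i + 2)) * y (some i)) := by
        rw [sform, Fintype.sum_option, apply_none, Finset.mul_sum,
          ← Finset.sum_sub_distrib, ← Finset.sum_sub_distrib]
        refine congrArg _ (Finset.sum_congr rfl fun i _ => ?_)
        rw [apply_some]
        ring
    _ = _ := by
        rw [shift_left, shift_right, Fintype.sum_option y]
        ring

/-- The variation tensor of the singular member of the Wiman–Edge pencil consisting of
five conics: `Σ_{δ ∈ Δ_c/±} s(x,δ)·s(y,δ) = 3·s(x,y) + 4·s(Xx,y)`, i.e. the tensor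
`Σ_{δ∈Δ_c/±} δ⊗δ` equals `(3+4X)` applied to the inverse form of `s`. -/
theorem variation_tensor_five_conics (x y : V) :
    (∑ i : ZMod 5,
        sform x (eV + ee i + ee (i + 1)) * sform y (eV + ee i + ee (i + 1))) +
      (∑ i : ZMod 5,
        sform x (ee i - ee (i - 2) - ee (i + 2)) * sform y (ee i - ee (i - 2) - ee (i + 2)))
      = 3 * sform x y + 4 * sform (Xmap x) y := by
  simp only [sform_eV_add_ee_add_ee, sform_ee_sub_ee_sub_ee]
  have first_family := sum_const_add_shift_mul_const_add_shift (x ∘ some) (y ∘ some)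
    (x none) (y none) (1 : ZMod 5)
  have second_family := sum_sub_shifts_mul_sub_shifts (x ∘ some) (y ∘ some) (2 : ZMod 5)
  have sum_mul_sum := sum_crossCorrelation (x ∘ some) (y ∘ some)
  have two_add_two : (2 + 2 : ZMod 5) = -1 := rfl
  have neg_two_add_neg_two : (-2 + -2 : ZMod 5) = 1 := rfl
  rw [two_add_two, neg_two_add_neg_two] at second_family
  rw [sum_univ_zmod_five] at sum_mul_sum
  rw [sform_Xmap, sform_eq_add_crossCorrelation, Fintype.sum_option x, Fintype.sum_option y]
  simp only [Function.comp_apply, nsmul_eq_mul, ZMod.card] at first_family second_family sum_mul_sum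
  rw [first_family, second_family]
  push_cast
  linear_combination 2 * sum_mul_sum
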